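/- Let G ∈ C_3^2 be a simplified two-qudit third-level gate, with G Z₁ G* = D_{Φ₁}P₁, G X₁ G* = D_{Φ₂}P₂, G Z₂ G* = D_{Φ₃}P₃, G X₂ G* = D_{Φ₄}P₄, where each Φ_i is a symmetric 2×2 matrix over ZMod d and each P_i ∈ C_1^2 is a Pauli gate. Let M be the 3×4 matrix over ZMod d whose i-th column (i = 1,…,4) is ((Φ_i)₁₁, (Φ_i)₂₂, 2(Φ_i)₁₂). Then G is semi-Clifford if and only if the kernel of M, as a subspace of (ZMod d)^4, contains a Lagrangian semibasis. -/

import Mathlib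

open Matrix

noncomputable section

/-- The space of `n`-qudit gates: `d^n × d^n` complex matrices indexed by `(ZMod d)^n`. -/
abbrev Mat (d n : ℕ) := Matrix (Fin n → ZMod d) (Fin n → ZMod d) ℂ

/-- The primitive `d`-th root of unity `ω = exp(2πi/d)`. -/
def omega (d : ℕ) : ℂ := Complex.exp (2 * Real.pi * Complex.I / d)

/-- `ω` raised to the canonical integer lift of `c : ZMod d`. -/
def omegaPow (d : ℕ) (c : ZMod d) : ℂ := omega d ^ c.val

/-- The Pauli gate `Z^p`, acting by `Z^p |z⟩ = ω^(p·z) |z⟩`. -/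
def ZP (d n : ℕ) [NeZero d] (p : Fin n → ZMod d) : Mat d n :=
  Matrix.diagonal fun z => omegaPow d (p ⬝ᵥ z)

/-- The Pauli gate `X^q`, acting by `X^q |z⟩ = |z + q⟩`. -/
def XQ (d n : ℕ) [NeZero d] (q : Fin n → ZMod d) : Mat d n :=
  Matrix.of fun z' z => if z' = z + q then 1 else 0

/-- The basic Pauli gate `Z_i`. -/
def Zi (d n : ℕ) [NeZero d] (i : Fin n) : Mat d n := ZP d n (Pi.single i 1)

/-- The basic Pauli gate `X_i`. -/
def Xi (d n : ℕ) [NeZero d] (i : Fin n) : Mat d n := XQ d n (Pi.single i 1)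

/-- The Pauli group `C_1^n`. -/
def Pauli (d n : ℕ) [NeZero d] : Set (Mat d n) :=
  { M | ∃ (c : ZMod d) (p q : Fin n → ZMod d), M = omegaPow d c • (ZP d n p * XQ d n q) }

/-- The Clifford group `C_2^n`. -/
def Clifford (d n : ℕ) [NeZero d] : Set (Mat d n) :=
  { C | C ∈ Matrix.unitaryGroup (Fin n → ZMod d) ℂ ∧ ∀ P ∈ Pauli d n, C * P * Cᴴ ∈ Pauli d n }

/-- The third level `C_3^n` of the Clifford hierarchy. -/
def Third (d n : ℕ) [NeZero d] : Set (Mat d n) :=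
  { G | G ∈ Matrix.unitaryGroup (Fin n → ZMod d) ℂ ∧ ∀ P ∈ Pauli d n, G * P * Gᴴ ∈ Clifford d n }

/-- The quadratic diagonal gate `D_Φ |z⟩ = ω^(zᵀ Φ z) |z⟩`. -/
def quadGate (d n : ℕ) [NeZero d] (Φ : Matrix (Fin n) (Fin n) (ZMod d)) : Mat d n :=
  Matrix.diagonal fun z => omegaPow d (z ⬝ᵥ (Φ *ᵥ z))

/-- A gate is semi-Clifford if it is `C₁ D C₂` for Cliffords `C₁, C₂` and a
diagonal third-level gate `D`. -/
def SemiClifford (d n : ℕ) [NeZero d] (G : Mat d n) : Prop :=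
  ∃ C₁ ∈ Clifford d n, ∃ C₂ ∈ Clifford d n, ∃ D ∈ Third d n, D.IsDiag ∧ G = C₁ * D * C₂

/-- A Clifford gate is almost diagonal if it is `D_Φ P` for symmetric `Φ` and Pauli `P`. -/
def AlmostDiag (d n : ℕ) [NeZero d] (M : Mat d n) : Prop :=
  ∃ Φ : Matrix (Fin n) (Fin n) (ZMod d), Φ.IsSymm ∧ ∃ P ∈ Pauli d n, M = quadGate d n Φ * P

/-- A third-level gate is simplified if its conjugate tuple consists of
almost diagonal Clifford gates. -/
def Simplified (d n : ℕ) [NeZero d] (G : Mat d n) : Prop :=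
  ∀ i : Fin n, AlmostDiag d n (G * Zi d n i * Gᴴ) ∧ AlmostDiag d n (G * Xi d n i * Gᴴ)

/-- The symplectic product on `(ZMod d)⁴`. -/
def symp4 (d : ℕ) (u v : Fin 4 → ZMod d) : ZMod d :=
  u 0 * v 1 - u 1 * v 0 + u 2 * v 3 - u 3 * v 2

/-!
Pauli gates are labelled, up to a phase, by vectors of the phase space `(ZMod d)^n × (ZMod d)^n`,
and the symplectic form records their commutation. A third-level gate `G` is semi-Clifford iff it
conjugates to Pauli gates the `n` commuting Pauli gates of some Lagrangian semibasis. Indeed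
`G = C₁ D C₂` sends `C₂* Z_i C₂` to `C₁ Z_i C₁*`. Conversely, a Lagrangian semibasis extends to a
symplectic basis, so by the Stone–von Neumann theorem its Pauli gates are the images of the `Z_i`
under a Clifford gate; doing this for the semibasis and for its image under `G` produces Clifford
gates `C` and `E` such that `E* G C` commutes with every `Z_i`, hence is diagonal.

For a simplified gate the quadratic part of `G P G*` depends linearly on the phase space vector of
`P`, because moving a Pauli gate past `D_Φ` only changes the Pauli gate, and `D_Φ` is itself a Pauli
gate only if `Φ = 0`. So `G P G*` is a Pauli gate exactly when the vector of `P` lies in a kernel,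
which for two qudits is the kernel of the 3×4 matrix.
-/

section OmegaPow

variable {d : ℕ} [NeZero d]

lemma omegaPow_eq_stdAddChar (c : ZMod d) : omegaPow d c = ZMod.stdAddChar c := by
  rw [omegaPow, omega, ← Complex.exp_nat_mul, ZMod.stdAddChar_apply, ZMod.toCircle_apply]
  congr 1
  ring

lemma omegaPow_zero : omegaPow d 0 = 1 := by
  rw [omegaPow_eq_stdAddChar, AddChar.map_zero_eq_one]

lemma omegaPow_add (a b : ZMod d) : omegaPow d (a + b) = omegaPow d a * omegaPow d b := by
  simp only [omegaPow_eq_stdAddChar, AddChar.map_add_eq_mul]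

lemma omegaPow_injective : Function.Injective (omegaPow d) := fun a b h =>
  ZMod.injective_stdAddChar (by simpa only [omegaPow_eq_stdAddChar] using h)

lemma eq_zero_of_omegaPow_mul_eq_self {a : ZMod d} (ha : a ≠ 0) {r : ℂ}
    (h : omegaPow d a * r = r) : r = 0 := by
  by_contra hr
  exact ha (omegaPow_injective (((mul_eq_right₀ hr).1 h).trans omegaPow_zero.symm))

lemma omegaPow_ne_zero (c : ZMod d) : omegaPow d c ≠ 0 := by
  rw [omegaPow_eq_stdAddChar, ZMod.stdAddChar_apply]
  exact Circle.coe_ne_zero _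

lemma star_omegaPow (c : ZMod d) : star (omegaPow d c) = omegaPow d (-c) := by
  rw [omegaPow_eq_stdAddChar, omegaPow_eq_stdAddChar, AddChar.map_neg_eq_conj, starRingEnd_apply]

/-- The character `x ↦ ω^(t·x)` of `(ZMod d)^ι`. -/
def dotChar {ι : Type*} [Fintype ι] (t : ι → ZMod d) : AddChar (ι → ZMod d) ℂ where
  toFun x := omegaPow d (t ⬝ᵥ x)
  map_zero_eq_one' := by rw [dotProduct_zero, omegaPow_zero]
  map_add_eq_mul' x y := by rw [dotProduct_add, omegaPow_add]

lemma dotChar_surjective {ι : Type*} [Fintype ι] :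
    Function.Surjective (dotChar : (ι → ZMod d) → AddChar (ι → ZMod d) ℂ) := by
  classical
  have h_inj : Function.Injective (dotChar : (ι → ZMod d) → AddChar (ι → ZMod d) ℂ) := by
    intro s t hst
    exact dotProduct_eq s t fun x => omegaPow_injective (DFunLike.congr_fun hst x)
  exact ((Fintype.bijective_iff_injective_and_card _).2 ⟨h_inj, AddChar.card_eq.symm⟩).2

lemma exists_dotProduct_eq_zero_of_notMem {ι : Type*} [Fintype ι]
    (S : AddSubgroup (ι → ZMod d)) {y : ι → ZMod d} (hy : y ∉ S) :
    ∃ t : ι → ZMod d, (∀ x ∈ S, t ⬝ᵥ x = 0) ∧ t ⬝ᵥ y ≠ 0 := by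
  have hy_mk : (y : (ι → ZMod d) ⧸ S) ≠ 0 := by rwa [Ne, QuotientAddGroup.eq_zero_iff]
  obtain ⟨ψ, hψ⟩ := AddChar.exists_apply_ne_zero.2 hy_mk
  obtain ⟨t, ht⟩ := dotChar_surjective (ψ.compAddMonoidHom (QuotientAddGroup.mk' S))
  have ht_apply (x : ι → ZMod d) : omegaPow d (t ⬝ᵥ x) = ψ x := DFunLike.congr_fun ht x
  refine ⟨t, fun x hx => omegaPow_injective ?_, fun h => hψ ?_⟩
  · rw [ht_apply, (QuotientAddGroup.eq_zero_iff x).2 hx, AddChar.map_zero_eq_one, omegaPow_zero]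
  · rw [← ht_apply, h, omegaPow_zero]

end OmegaPow

section PhaseSpace

/-- The phase space `(ZMod d)^n × (ZMod d)^n`: `(p, q)` labels the Pauli gate `Z^p X^q`. -/
abbrev PhaseSpace (d n : ℕ) := (Fin n → ZMod d) × (Fin n → ZMod d)

variable {d n : ℕ}

/-- The symplectic form on phase space, which governs the commutation of Pauli gates. -/
def sympForm : LinearMap.BilinForm (ZMod d) (PhaseSpace d n) :=
  LinearMap.mk₂ (ZMod d) (fun w w' => w.1 ⬝ᵥ w'.2 - w.2 ⬝ᵥ w'.1)
    (fun _ _ _ => by simp only [Prod.fst_add, Prod.snd_add, add_dotProduct]; ring)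
    (fun _ _ _ => by simp only [Prod.smul_fst, Prod.smul_snd, smul_dotProduct, smul_sub])
    (fun _ _ _ => by simp only [Prod.fst_add, Prod.snd_add, dotProduct_add]; ring)
    (fun _ _ _ => by simp only [Prod.smul_fst, Prod.smul_snd, dotProduct_smul, smul_sub])

lemma sympForm_apply (w w' : PhaseSpace d n) :
    sympForm w w' = w.1 ⬝ᵥ w'.2 - w.2 ⬝ᵥ w'.1 := rfl

lemma sympForm_self (w : PhaseSpace d n) : sympForm w w = 0 := by
  rw [sympForm_apply, dotProduct_comm w.1, sub_self]

lemma neg_sympForm (w w' : PhaseSpace d n) : -sympForm w w' = sympForm w' w := by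
  rw [sympForm_apply, sympForm_apply, dotProduct_comm w.1, dotProduct_comm w.2, neg_sub]

lemma eq_zero_of_sympForm_eq_zero {w : PhaseSpace d n} (h : ∀ x, sympForm w x = 0) : w = 0 := by
  refine Prod.ext (funext fun i => ?_) (funext fun i => ?_)
  · simpa [sympForm_apply] using h (0, Pi.single i 1)
  · simpa [sympForm_apply] using h (Pi.single i 1, 0)

lemma sympForm_sum_smul_sum_smul {ι κ : Type*} [Fintype ι] [Fintype κ] (u : ι → PhaseSpace d n)
    (v : κ → PhaseSpace d n) (s : ι → ZMod d) (t : κ → ZMod d) :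
    sympForm (∑ i, s i • u i) (∑ j, t j • v j) = ∑ i, ∑ j, s i * (t j * sympForm (u i) (v j)) := by
  simp only [map_sum, map_smul, LinearMap.sum_apply, LinearMap.smul_apply, smul_eq_mul,
    Finset.mul_sum]
  rw [Finset.sum_comm]
  simp only [mul_left_comm]

lemma sympForm_sum_smul_of_isotropic {ι : Type*} [Fintype ι] {u : ι → PhaseSpace d n}
    (hu : ∀ i j, sympForm (u i) (u j) = 0) (s t : ι → ZMod d) :
    sympForm (∑ i, s i • u i) (∑ i, t i • u i) = 0 := by
  simp only [sympForm_sum_smul_sum_smul, hu, mul_zero, Finset.sum_const_zero]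

lemma sympForm_sum_smul_of_dual {ι : Type*} [Fintype ι] [DecidableEq ι] {u v : ι → PhaseSpace d n}
    (huv : ∀ i j, sympForm (u i) (v j) = if i = j then 1 else 0) (s t : ι → ZMod d) :
    sympForm (∑ i, s i • u i) (∑ i, t i • v i) = s ⬝ᵥ t := by
  simp only [sympForm_sum_smul_sum_smul, huv, mul_ite, mul_one, mul_zero, Finset.sum_ite_eq,
    Finset.mem_univ, if_true, dotProduct]

lemma exists_sympForm_eq [NeZero d] {ι : Type*} [Finite ι] {u : ι → PhaseSpace d n}
    (hu : LinearIndependent (ZMod d) u) (y : ι → ZMod d) : ∃ w, ∀ i, sympForm (u i) w = y i := by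
  have := Fintype.ofFinite ι
  let φ : PhaseSpace d n →ₗ[ZMod d] (ι → ZMod d) := LinearMap.pi fun i => sympForm (u i)
  suffices hy : y ∈ φ.range.toAddSubgroup by
    obtain ⟨w, hw⟩ := hy
    exact ⟨w, congrFun hw⟩
  by_contra hy
  obtain ⟨t, ht, hty⟩ := exists_dotProduct_eq_zero_of_notMem _ hy
  have h_comb : ∑ i, t i • u i = 0 := eq_zero_of_sympForm_eq_zero fun w => by
    rw [map_sum, LinearMap.sum_apply, ← ht (φ w) ⟨w, rfl⟩]
    simp only [map_smul, LinearMap.smul_apply, smul_eq_mul]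
    rfl
  have ht_zero : t = 0 := funext (Fintype.linearIndependent_iff.1 hu t h_comb)
  exact hty (by rw [ht_zero, zero_dotProduct])

/-- A Lagrangian semibasis: `n` independent, pairwise orthogonal vectors of phase space. -/
structure IsLagrangianSemibasis (u : Fin n → PhaseSpace d n) : Prop where
  linearIndependent : LinearIndependent (ZMod d) u
  isotropic : ∀ i j, sympForm (u i) (u j) = 0

lemma isLagrangianSemibasis_single :
    IsLagrangianSemibasis fun i => ((Pi.single i 1, 0) : PhaseSpace d n) where
  linearIndependent :=
    (Pi.linearIndependent_single_one (Fin n) (ZMod d)).map'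
      (LinearMap.inl (ZMod d) (Fin n → ZMod d) (Fin n → ZMod d))
      (LinearMap.ker_eq_bot.2 LinearMap.inl_injective)
  isotropic i j := by simp only [sympForm_apply, dotProduct_zero, zero_dotProduct, sub_zero]

lemma IsLagrangianSemibasis.exists_symplectic_complement [NeZero d] [Invertible (2 : ZMod d)]
    {u : Fin n → PhaseSpace d n} (hu : IsLagrangianSemibasis u) :
    ∃ v : Fin n → PhaseSpace d n, (∀ i j, sympForm (u i) (v j) = if i = j then 1 else 0) ∧
      ∀ i j, sympForm (v i) (v j) = 0 := by
  choose x hx using fun j => exists_sympForm_eq hu.linearIndependent fun i => if i = j then 1 else 0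
  have h_comb_left (a : Fin n → ZMod d) (j) : sympForm (∑ k, a k • u k) (x j) = a j := by
    simp [hx]
  have h_comb_right (a : Fin n → ZMod d) (i) : sympForm (x i) (∑ k, a k • u k) = -a i := by
    rw [← neg_sympForm, h_comb_left]
  -- Subtracting half of the defect `[x j, x k]` along `u k` makes the dual family isotropic.
  refine ⟨fun j => x j - ∑ k, (⅟2 * sympForm (x j) (x k)) • u k, fun i j => ?_, fun i j => ?_⟩
  · simp [hx, hu.isotropic]
  · rw [map_sub, map_sub, LinearMap.sub_apply, LinearMap.sub_apply,
      sympForm_sum_smul_of_isotropic hu.isotropic, h_comb_left, h_comb_right, ← neg_sympForm (x i)]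
    linear_combination (-sympForm (x i) (x j)) * invOf_mul_self (2 : ZMod d)

end PhaseSpace

section Conjugation

variable {m α : Type*} [Fintype m] [DecidableEq m] [CommRing α] [StarRing α] {U : Matrix m m α}

lemma conjTranspose_mul_self_of_mem_unitaryGroup (hU : U ∈ unitaryGroup m α) : Uᴴ * U = 1 :=
  mem_unitaryGroup_iff'.1 hU

lemma self_mul_conjTranspose_of_mem_unitaryGroup (hU : U ∈ unitaryGroup m α) : U * Uᴴ = 1 :=
  mem_unitaryGroup_iff.1 hU

lemma conjTranspose_mem_unitaryGroup (hU : U ∈ unitaryGroup m α) : Uᴴ ∈ unitaryGroup m α :=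
  Unitary.star_mem hU

lemma conj_mul_of_mem_unitaryGroup (hU : U ∈ unitaryGroup m α) (A B : Matrix m m α) :
    U * (A * B) * Uᴴ = U * A * Uᴴ * (U * B * Uᴴ) := by
  calc U * (A * B) * Uᴴ = U * A * (Uᴴ * U) * B * Uᴴ := by
        rw [conjTranspose_mul_self_of_mem_unitaryGroup hU]; simp only [mul_one, mul_assoc]
    _ = U * A * Uᴴ * (U * B * Uᴴ) := by simp only [mul_assoc]

lemma conjTranspose_conj_conj_of_mem_unitaryGroup (hU : U ∈ unitaryGroup m α)
    (A : Matrix m m α) : Uᴴ * (U * A * Uᴴ) * U = A := by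
  calc Uᴴ * (U * A * Uᴴ) * U = (Uᴴ * U) * A * (Uᴴ * U) := by simp only [mul_assoc]
    _ = A := by rw [conjTranspose_mul_self_of_mem_unitaryGroup hU, one_mul, mul_one]

lemma conj_eq_iff_of_mem_unitaryGroup (hU : U ∈ unitaryGroup m α) {A B : Matrix m m α} :
    U * A * Uᴴ = B ↔ U * A = B * U := by
  constructor
  · rintro rfl
    rw [mul_assoc, conjTranspose_mul_self_of_mem_unitaryGroup hU, mul_one]
  · intro h
    rw [h, mul_assoc, self_mul_conjTranspose_of_mem_unitaryGroup hU, mul_one]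

lemma star_mulVec_dotProduct_mulVec (hU : U ∈ unitaryGroup m α) (x y : m → α) :
    star (U *ᵥ x) ⬝ᵥ (U *ᵥ y) = star x ⬝ᵥ y := by
  rw [star_mulVec, dotProduct_mulVec, vecMul_vecMul,
    conjTranspose_mul_self_of_mem_unitaryGroup hU, vecMul_one]

end Conjugation

section CliffordHierarchy

variable {d n : ℕ} [NeZero d]

lemma pauli_finite : (Pauli d n).Finite := by
  refine (Set.finite_range fun x : ZMod d × PhaseSpace d n =>
    omegaPow d x.1 • (ZP d n x.2.1 * XQ d n x.2.2)).subset ?_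
  rintro M ⟨c, p, q, rfl⟩
  exact ⟨(c, p, q), rfl⟩

/-- Conjugation by `C` is an injective self-map of the finite set of Pauli gates, hence onto. -/
lemma conjTranspose_mem_clifford {C : Mat d n} (hC : C ∈ Clifford d n) : Cᴴ ∈ Clifford d n := by
  refine ⟨conjTranspose_mem_unitaryGroup hC.1, fun P hP => ?_⟩
  have h_inj : Set.InjOn (fun P => C * P * Cᴴ) (Pauli d n) :=
    (Function.LeftInverse.injective (g := fun M => Cᴴ * M * C)
      (conjTranspose_conj_conj_of_mem_unitaryGroup hC.1)).injOn
  have h_bij := (pauli_finite.injOn_iff_bijOn_of_mapsTo hC.2).1 h_inj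
  obtain ⟨Q, hQ, rfl⟩ := h_bij.surjOn hP
  simpa only [conjTranspose_conjTranspose,
    conjTranspose_conj_conj_of_mem_unitaryGroup hC.1] using hQ

lemma mul_mem_clifford {C C' : Mat d n} (hC : C ∈ Clifford d n) (hC' : C' ∈ Clifford d n) :
    C * C' ∈ Clifford d n :=
  ⟨mul_mem hC.1 hC'.1, fun P hP => by
    simpa only [conjTranspose_mul, mul_assoc] using hC.2 _ (hC'.2 P hP)⟩

lemma mul_mul_mem_third {C C' G : Mat d n} (hC : C ∈ Clifford d n) (hG : G ∈ Third d n)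
    (hC' : C' ∈ Clifford d n) : C * G * C' ∈ Third d n := by
  refine ⟨mul_mem (mul_mem hC.1 hG.1) hC'.1, fun P hP => ?_⟩
  simpa only [conjTranspose_mul, mul_assoc] using
    mul_mem_clifford (mul_mem_clifford hC (hG.2 _ (hC'.2 P hP))) (conjTranspose_mem_clifford hC)

lemma isDiag_of_forall_commute_Zi {M : Mat d n} (h : ∀ i, M * Zi d n i = Zi d n i * M) :
    M.IsDiag := by
  intro x z hxz
  obtain ⟨i, hi⟩ := Function.ne_iff.1 hxz
  have h_entry : M x z * omegaPow d (z i) = omegaPow d (x i) * M x z := by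
    simpa only [Zi, ZP, mul_diagonal, diagonal_mul, single_dotProduct, one_mul]
      using congrFun₂ (h i) x z
  by_contra h_ne
  rw [mul_comm] at h_entry
  exact hi (omegaPow_injective (mul_right_cancel₀ h_ne h_entry)).symm

lemma diag_mul_ZP_comm {D : Mat d n} (hD : D.IsDiag) (p : Fin n → ZMod d) :
    D * ZP d n p = ZP d n p * D := by
  rw [← hD.diagonal_diag, ZP, diagonal_mul_diagonal, diagonal_mul_diagonal]
  simp only [mul_comm]

end CliffordHierarchy

section Weyl

variable {d n : ℕ} [NeZero d] [Invertible (2 : ZMod d)]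

/-- The Weyl operator `ω^(c - p·q/2) Z^p X^q` at `w = (p, q)`. The Weyl operators are exactly the
Pauli gates, but this choice of phase makes the cocycle of their product alternating, so that they
form commuting families without correction terms along isotropic subspaces. -/
def weyl (c : ZMod d) (w : PhaseSpace d n) : Mat d n :=
  omegaPow d (c - ⅟2 * (w.1 ⬝ᵥ w.2)) • (ZP d n w.1 * XQ d n w.2)

lemma weyl_apply (c : ZMod d) (w : PhaseSpace d n) (x z : Fin n → ZMod d) :
    weyl c w x z =
      if x = z + w.2 then omegaPow d (c - ⅟2 * (w.1 ⬝ᵥ w.2) + w.1 ⬝ᵥ x) else 0 := by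
  simp only [weyl, ZP, XQ, Matrix.smul_apply, diagonal_mul, of_apply, omegaPow_add, smul_eq_mul,
    mul_ite, mul_one, mul_zero]

lemma mem_pauli_iff {M : Mat d n} : M ∈ Pauli d n ↔ ∃ c w, M = weyl c w := by
  constructor
  · rintro ⟨c, p, q, rfl⟩
    exact ⟨c + ⅟2 * (p ⬝ᵥ q), (p, q), by rw [weyl, add_sub_cancel_right]⟩
  · rintro ⟨c, w, rfl⟩
    exact ⟨_, _, _, rfl⟩

lemma weyl_mem_pauli (c : ZMod d) (w : PhaseSpace d n) : weyl c w ∈ Pauli d n :=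
  mem_pauli_iff.2 ⟨c, w, rfl⟩

lemma omegaPow_smul_weyl (a c : ZMod d) (w : PhaseSpace d n) :
    omegaPow d a • weyl c w = weyl (a + c) w := by
  rw [weyl, weyl, smul_smul, ← omegaPow_add, add_sub_assoc]

lemma ZP_eq_weyl (p : Fin n → ZMod d) : ZP d n p = weyl 0 (p, 0) := by
  ext x z
  simp [weyl_apply, ZP, diagonal_apply]

lemma XQ_eq_weyl (q : Fin n → ZMod d) : XQ d n q = weyl 0 (0, q) := by
  ext x z
  simp [weyl_apply, XQ, omegaPow_zero]

lemma Zi_eq_weyl (i : Fin n) : Zi d n i = weyl 0 (Pi.single i 1, 0) := ZP_eq_weyl _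

lemma Xi_eq_weyl (i : Fin n) : Xi d n i = weyl 0 (0, Pi.single i 1) := XQ_eq_weyl _

lemma weyl_zero_zero : (weyl 0 0 : Mat d n) = 1 := by
  ext x z
  simp [weyl_apply, one_apply, omegaPow_zero]

lemma weyl_mul_weyl (c c' : ZMod d) (w w' : PhaseSpace d n) :
    weyl c w * weyl c' w' = weyl (c + c' + ⅟2 * sympForm w w') (w + w') := by
  ext x z
  rw [mul_apply, Finset.sum_eq_single (z + w'.2)]
  · rw [weyl_apply, weyl_apply, weyl_apply, if_pos rfl, Prod.snd_add, add_comm w.2, ← add_assoc]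
    split_ifs with hx
    · rw [← omegaPow_add, hx, sympForm_apply]
      congr 1
      simp only [Prod.fst_add, dotProduct_add, add_dotProduct]
      rw [dotProduct_comm w.2]
      linear_combination (w'.1 ⬝ᵥ w.2) * invOf_mul_self (2 : ZMod d)
    · rw [zero_mul]
  · intro y _ hy
    rw [weyl_apply c', if_neg hy, mul_zero]
  · simp

lemma conjTranspose_weyl (c : ZMod d) (w : PhaseSpace d n) : (weyl c w)ᴴ = weyl (-c) (-w) := by
  ext x z
  rw [conjTranspose_apply, weyl_apply, weyl_apply, Prod.snd_neg, ← sub_eq_add_neg]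
  by_cases hz : z = x + w.2
  · rw [if_pos hz, if_pos (eq_sub_of_add_eq hz.symm), star_omegaPow, hz]
    congr 1
    simp only [Prod.fst_neg, neg_dotProduct, dotProduct_neg, dotProduct_add]
    linear_combination (w.1 ⬝ᵥ w.2) * invOf_mul_self (2 : ZMod d)
  · rw [if_neg hz, if_neg fun hx => hz (add_eq_of_eq_sub hx).symm, star_zero]

lemma weyl_mem_unitaryGroup (c : ZMod d) (w : PhaseSpace d n) :
    weyl c w ∈ unitaryGroup (Fin n → ZMod d) ℂ := by
  rw [mem_unitaryGroup_iff, star_eq_conjTranspose, conjTranspose_weyl, weyl_mul_weyl, map_neg,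
    sympForm_self, neg_zero, mul_zero, add_zero, add_neg_cancel, add_neg_cancel, weyl_zero_zero]

lemma weyl_commutation (c c' : ZMod d) (w w' : PhaseSpace d n) :
    weyl c w * weyl c' w' = omegaPow d (sympForm w w') • (weyl c' w' * weyl c w) := by
  rw [weyl_mul_weyl, weyl_mul_weyl, omegaPow_smul_weyl, add_comm w' w, ← neg_sympForm w w']
  congr 1
  linear_combination (sympForm w w') * invOf_mul_self (2 : ZMod d)

lemma weyl_inj {c c' : ZMod d} {w w' : PhaseSpace d n} :
    weyl c w = weyl c' w' ↔ c = c' ∧ w = w' := by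
  refine ⟨fun h => ?_, by rintro ⟨rfl, rfl⟩; rfl⟩
  have h_snd : w.2 = w'.2 := by
    by_contra h_ne
    have h_entry := congrFun₂ h w.2 0
    rw [weyl_apply, weyl_apply, zero_add, zero_add, if_pos rfl, if_neg h_ne] at h_entry
    exact omegaPow_ne_zero _ h_entry
  have h_exponent (x : Fin n → ZMod d) : c - ⅟2 * (w.1 ⬝ᵥ w.2) + w.1 ⬝ᵥ x =
      c' - ⅟2 * (w'.1 ⬝ᵥ w'.2) + w'.1 ⬝ᵥ x := by
    have h_entry := congrFun₂ h x (x - w.2)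
    rw [weyl_apply, weyl_apply, ← h_snd, sub_add_cancel, if_pos rfl, if_pos rfl] at h_entry
    exact omegaPow_injective (by rwa [← h_snd])
  have h_phase := h_exponent 0
  rw [dotProduct_zero, dotProduct_zero, add_zero, add_zero] at h_phase
  have h_fst : w.1 = w'.1 := dotProduct_eq _ _ fun x => by
    simpa only [h_phase, add_right_inj] using h_exponent x
  refine ⟨?_, Prod.ext h_fst h_snd⟩
  rwa [h_fst, h_snd, sub_left_inj] at h_phase

lemma omegaPow_smul_mem_pauli_iff {a : ZMod d} {M : Mat d n} :
    omegaPow d a • M ∈ Pauli d n ↔ M ∈ Pauli d n := by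
  have h_smul (b : ZMod d) {N : Mat d n} (hN : N ∈ Pauli d n) : omegaPow d b • N ∈ Pauli d n := by
    obtain ⟨c, w, rfl⟩ := mem_pauli_iff.1 hN
    rw [omegaPow_smul_weyl]
    exact weyl_mem_pauli _ _
  refine ⟨fun h => ?_, h_smul a⟩
  simpa only [smul_smul, ← omegaPow_add, neg_add_cancel, omegaPow_zero, one_smul]
    using h_smul (-a) h

lemma mul_mem_pauli {P Q : Mat d n} (hP : P ∈ Pauli d n) (hQ : Q ∈ Pauli d n) :
    P * Q ∈ Pauli d n := by
  obtain ⟨c, w, rfl⟩ := mem_pauli_iff.1 hP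
  obtain ⟨c', w', rfl⟩ := mem_pauli_iff.1 hQ
  rw [weyl_mul_weyl]
  exact weyl_mem_pauli _ _

lemma mul_mem_pauli_iff_left {M P : Mat d n} (hP : P ∈ Pauli d n) :
    M * P ∈ Pauli d n ↔ M ∈ Pauli d n := by
  refine ⟨fun h => ?_, fun hM => mul_mem_pauli hM hP⟩
  obtain ⟨c, w, rfl⟩ := mem_pauli_iff.1 hP
  have h_mul := mul_mem_pauli h (weyl_mem_pauli (-c) (-w))
  rwa [mul_assoc, ← conjTranspose_weyl,
    self_mul_conjTranspose_of_mem_unitaryGroup (weyl_mem_unitaryGroup c w), mul_one] at h_mul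

end Weyl

section StoneVonNeumann

lemma exists_smul_star_dotProduct_self_eq_one {m : Type*} [Fintype m] {v : m → ℂ} (hv : v ≠ 0) :
    ∃ k : ℂ, star (k • v) ⬝ᵥ (k • v) = 1 := by
  let x : EuclideanSpace ℂ m := WithLp.toLp 2 v
  have hx : x ≠ 0 := fun h => hv (congrArg WithLp.ofLp h)
  have h_norm : ‖(‖x‖ : ℂ)⁻¹ • x‖ = 1 := norm_smul_inv_norm hx
  have h_inner := inner_self_eq_norm_sq_to_K (𝕜 := ℂ) ((‖x‖ : ℂ)⁻¹ • x)
  rw [h_norm, EuclideanSpace.inner_eq_star_dotProduct, dotProduct_comm, RCLike.ofReal_one,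
    one_pow] at h_inner
  exact ⟨(‖x‖ : ℂ)⁻¹, h_inner⟩

variable {d n : ℕ} [NeZero d]

lemma star_dotProduct_eq_zero_of_eigenvectors {m : Type*} [Fintype m] [DecidableEq m]
    {U : Matrix m m ℂ} (hU : U ∈ unitaryGroup m ℂ) {x y : m → ℂ} {a b : ZMod d} (hab : a ≠ b)
    (hx : U *ᵥ x = omegaPow d a • x) (hy : U *ᵥ y = omegaPow d b • y) : star x ⬝ᵥ y = 0 := by
  have h_inner := star_mulVec_dotProduct_mulVec hU x y
  rw [hx, hy, star_smul, smul_dotProduct, dotProduct_smul, smul_smul, star_omegaPow,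
    ← omegaPow_add, smul_eq_mul] at h_inner
  exact eq_zero_of_omegaPow_mul_eq_self (fun h => hab (neg_add_eq_zero.1 h)) h_inner

/-- A pair of unitary representations of `(ZMod d)^n` satisfying the Weyl relations
`A(s) B(t) = ω^(s·t) B(t) A(s)` of the Pauli gates `s ↦ Z^s`, `t ↦ X^t`. -/
structure IsWeylPair (A B : AddChar (Fin n → ZMod d) (Mat d n)) : Prop where
  left_unitary : ∀ s, A s ∈ unitaryGroup (Fin n → ZMod d) ℂ
  right_unitary : ∀ t, B t ∈ unitaryGroup (Fin n → ZMod d) ℂ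
  commutation : ∀ s t, A s * B t = omegaPow d (s ⬝ᵥ t) • (B t * A s)

namespace IsWeylPair

variable {A B : AddChar (Fin n → ZMod d) (Mat d n)}

lemma trace_left_eq_zero (h : IsWeylPair A B) {s : Fin n → ZMod d} (hs : s ≠ 0) :
    (A s).trace = 0 := by
  obtain ⟨i, hi⟩ := Function.ne_iff.1 hs
  let t : Fin n → ZMod d := Pi.single i 1
  have hst : s ⬝ᵥ t = s i := dotProduct_single_one s i
  have hB : B t * B (-t) = 1 := by rw [← AddChar.map_add_eq_mul, add_neg_cancel, B.map_zero_eq_one]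
  have h_trace : (A s).trace = omegaPow d (s i) * (A s).trace := by
    calc (A s).trace = (A s * B t * B (-t)).trace := by rw [mul_assoc, hB, mul_one]
      _ = omegaPow d (s i) * (B t * A s * B (-t)).trace := by
        rw [h.commutation, hst, smul_mul, trace_smul, smul_eq_mul]
      _ = omegaPow d (s i) * (A s).trace := by
        rw [mul_assoc, trace_mul_comm, mul_assoc, ← AddChar.map_add_eq_mul, neg_add_cancel,
          B.map_zero_eq_one, mul_one]
  exact eq_zero_of_omegaPow_mul_eq_self hi h_trace.symm

lemma exists_fixed_vector (h : IsWeylPair A B) : ∃ v ≠ 0, ∀ s, A s *ᵥ v = v := by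
  let Q : Mat d n := ∑ s, A s
  have hAQ (s : Fin n → ZMod d) : A s * Q = Q := by
    simp only [Q, Finset.mul_sum, ← AddChar.map_add_eq_mul]
    exact Fintype.sum_equiv (Equiv.addLeft s) _ _ fun _ => rfl
  have hQ_trace : Q.trace = Fintype.card (Fin n → ZMod d) := by
    rw [trace_sum, Finset.sum_eq_single 0 (fun s _ hs => h.trace_left_eq_zero hs) (by simp),
      A.map_zero_eq_one, trace_one]
  have hQ : Q ≠ 0 := by
    rintro hQ
    rw [hQ, trace_zero] at hQ_trace
    exact (Nat.cast_ne_zero (R := ℂ)).2 Fintype.card_ne_zero hQ_trace.symm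
  obtain ⟨y, hy⟩ : ∃ y, Q.col y ≠ 0 := by
    by_contra! h_col
    exact hQ (ext_col h_col)
  exact ⟨Q.col y, hy, fun s => by rw [← mulVec_single_one, mulVec_mulVec, hAQ]⟩

lemma left_mulVec_right_mulVec (h : IsWeylPair A B) {v : (Fin n → ZMod d) → ℂ}
    (hv : ∀ s, A s *ᵥ v = v) (s t : Fin n → ZMod d) :
    A s *ᵥ B t *ᵥ v = omegaPow d (s ⬝ᵥ t) • B t *ᵥ v := by
  rw [mulVec_mulVec, h.commutation, smul_mulVec, ← mulVec_mulVec, hv]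

lemma star_right_mulVec_dotProduct (h : IsWeylPair A B) {v : (Fin n → ZMod d) → ℂ}
    (hv : ∀ s, A s *ᵥ v = v) (hv_norm : star v ⬝ᵥ v = 1) (z z' : Fin n → ZMod d) :
    star (B z *ᵥ v) ⬝ᵥ (B z' *ᵥ v) = (1 : Mat d n) z z' := by
  rcases eq_or_ne z z' with rfl | hz
  · rw [star_mulVec_dotProduct_mulVec (h.right_unitary z), hv_norm, one_apply_eq]
  · obtain ⟨i, hi⟩ := Function.ne_iff.1 hz
    have h_eigen (t) := h.left_mulVec_right_mulVec hv (Pi.single i 1) t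
    simp only [single_one_dotProduct] at h_eigen
    rw [one_apply_ne hz, star_dotProduct_eq_zero_of_eigenvectors (h.left_unitary _) hi
      (h_eigen z) (h_eigen z')]

theorem exists_unitary (h : IsWeylPair A B) : ∃ C ∈ unitaryGroup (Fin n → ZMod d) ℂ,
    (∀ s, C * ZP d n s = A s * C) ∧ ∀ t, C * XQ d n t = B t * C := by
  obtain ⟨v₀, hv₀, hAv₀⟩ := h.exists_fixed_vector
  obtain ⟨k, hk⟩ := exists_smul_star_dotProduct_self_eq_one hv₀
  let v := k • v₀
  have hAv (s) : A s *ᵥ v = v := by rw [mulVec_smul, hAv₀]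
  let C : Mat d n := of fun x z => (B z *ᵥ v) x
  have h_mul (M : Mat d n) (x z) : (M * C) x z = (M *ᵥ B z *ᵥ v) x := rfl
  refine ⟨C, mem_unitaryGroup_iff'.2 ?_, fun s => ?_, fun t => ?_⟩
  · ext z z'
    exact h.star_right_mulVec_dotProduct hAv hk z z'
  · ext x z
    rw [h_mul, h.left_mulVec_right_mulVec hAv, ZP, mul_diagonal, mul_comm]
    rfl
  · ext x z
    rw [h_mul, mulVec_mulVec, ← AddChar.map_add_eq_mul, add_comm]
    simp [mul_apply, XQ, C]

end IsWeylPair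

end StoneVonNeumann

section LagrangianSemibasis

variable {d n : ℕ} [NeZero d] [Invertible (2 : ZMod d)]

/-- The representation `s ↦ ω^(s·a) W(∑ sᵢ uᵢ)` of `(ZMod d)^n` by Weyl operators, attached to a
family of pairwise orthogonal phase space vectors `u` and phases `a`. -/
def weylAddChar {u : Fin n → PhaseSpace d n} (hu : ∀ i j, sympForm (u i) (u j) = 0)
    (a : Fin n → ZMod d) : AddChar (Fin n → ZMod d) (Mat d n) where
  toFun s := weyl (s ⬝ᵥ a) (∑ i, s i • u i)
  map_zero_eq_one' := by
    simp only [zero_dotProduct, Pi.zero_apply, zero_smul, Finset.sum_const_zero, weyl_zero_zero]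
  map_add_eq_mul' s t := by
    simp only [weyl_mul_weyl, sympForm_sum_smul_of_isotropic hu, mul_zero, add_zero,
      add_dotProduct, Pi.add_apply, add_smul, Finset.sum_add_distrib]

lemma weylAddChar_apply {u : Fin n → PhaseSpace d n} (hu : ∀ i j, sympForm (u i) (u j) = 0)
    (a s : Fin n → ZMod d) : weylAddChar hu a s = weyl (s ⬝ᵥ a) (∑ i, s i • u i) := rfl

lemma weylAddChar_single {u : Fin n → PhaseSpace d n} (hu : ∀ i j, sympForm (u i) (u j) = 0)
    (a : Fin n → ZMod d) (i : Fin n) : weylAddChar hu a (Pi.single i 1) = weyl (a i) (u i) := by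
  simp [weylAddChar_apply, Pi.single_apply, ite_smul]

lemma isWeylPair_weylAddChar {u v : Fin n → PhaseSpace d n}
    (hu : ∀ i j, sympForm (u i) (u j) = 0) (hv : ∀ i j, sympForm (v i) (v j) = 0)
    (huv : ∀ i j, sympForm (u i) (v j) = if i = j then 1 else 0) (a b : Fin n → ZMod d) :
    IsWeylPair (weylAddChar hu a) (weylAddChar hv b) where
  left_unitary _ := weyl_mem_unitaryGroup _ _
  right_unitary _ := weyl_mem_unitaryGroup _ _
  commutation s t := by
    rw [weylAddChar_apply, weylAddChar_apply, weyl_commutation, sympForm_sum_smul_of_dual huv]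

theorem IsLagrangianSemibasis.exists_clifford {u : Fin n → PhaseSpace d n}
    (hu : IsLagrangianSemibasis u) (a : Fin n → ZMod d) :
    ∃ C ∈ Clifford d n, ∀ i, C * Zi d n i * Cᴴ = weyl (a i) (u i) := by
  obtain ⟨v, huv, hv⟩ := hu.exists_symplectic_complement
  obtain ⟨C, hC, hCZ, hCX⟩ := (isWeylPair_weylAddChar hu.isotropic hv huv a 0).exists_unitary
  have h_conj_Z (s) := (conj_eq_iff_of_mem_unitaryGroup hC).2 (hCZ s)
  have h_conj_X (t) := (conj_eq_iff_of_mem_unitaryGroup hC).2 (hCX t)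
  refine ⟨C, ⟨hC, ?_⟩, fun i => (h_conj_Z _).trans (weylAddChar_single _ _ _)⟩
  rintro _ ⟨c, p, q, rfl⟩
  rw [Matrix.mul_smul, Matrix.smul_mul, omegaPow_smul_mem_pauli_iff,
    conj_mul_of_mem_unitaryGroup hC, h_conj_Z, h_conj_X]
  exact mul_mem_pauli (weyl_mem_pauli _ _) (weyl_mem_pauli _ _)

end LagrangianSemibasis

section ConjugationGraph

lemma sum_zmod_smul_mem {d : ℕ} [NeZero d] {M ι : Type*} [AddCommMonoid M] [Module (ZMod d) M]
    [Fintype ι] (S : AddSubmonoid M) {x : ι → M} (hx : ∀ i, x i ∈ S) (t : ι → ZMod d) :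
    ∑ i, t i • x i ∈ S := by
  refine sum_mem fun i _ => ?_
  rw [← ZMod.natCast_zmod_val (t i), Nat.cast_smul_eq_nsmul]
  exact nsmul_mem (hx i) _

variable {d n : ℕ} [NeZero d] [Invertible (2 : ZMod d)] {G : Mat d n}

/-- The graph of the partial action of `G` on phase space by conjugation of Pauli gates, phases
being forgotten. -/
def conjGraph (hG : G ∈ unitaryGroup (Fin n → ZMod d) ℂ) :
    AddSubmonoid (PhaseSpace d n × PhaseSpace d n) where
  carrier := {x | ∃ c c', G * weyl c x.1 * Gᴴ = weyl c' x.2}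
  zero_mem' := ⟨0, 0, by
    rw [Prod.fst_zero, Prod.snd_zero, weyl_zero_zero, mul_one,
      self_mul_conjTranspose_of_mem_unitaryGroup hG]⟩
  add_mem' := by
    rintro x y ⟨a, a', hx⟩ ⟨b, b', hy⟩
    refine ⟨a + b + ⅟2 * sympForm x.1 y.1, a' + b' + ⅟2 * sympForm x.2 y.2, ?_⟩
    rw [Prod.fst_add, Prod.snd_add, ← weyl_mul_weyl, ← weyl_mul_weyl,
      conj_mul_of_mem_unitaryGroup hG, hx, hy]

variable {hG : G ∈ unitaryGroup (Fin n → ZMod d) ℂ}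

lemma eq_zero_of_mem_conjGraph {w : PhaseSpace d n} (hw : (w, 0) ∈ conjGraph hG) : w = 0 := by
  obtain ⟨c, c', h⟩ := hw
  have h_scalar : weyl c' 0 = omegaPow d c' • (1 : Mat d n) := by
    rw [← weyl_zero_zero, omegaPow_smul_weyl, add_zero]
  have h_weyl : weyl c w = weyl c' 0 := by
    rw [← conjTranspose_conj_conj_of_mem_unitaryGroup hG (weyl c w), h, h_scalar,
      Matrix.mul_smul, Matrix.smul_mul, mul_one, conjTranspose_mul_self_of_mem_unitaryGroup hG]
  exact (weyl_inj.1 h_weyl).2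

lemma sympForm_eq_of_mem_conjGraph {w₁ w₂ w₁' w₂' : PhaseSpace d n}
    (h₁ : (w₁, w₁') ∈ conjGraph hG) (h₂ : (w₂, w₂') ∈ conjGraph hG) :
    sympForm w₁ w₂ = sympForm w₁' w₂' := by
  obtain ⟨a, a', h₁⟩ := h₁
  obtain ⟨b, b', h₂⟩ := h₂
  have h_conj := congrArg (G * · * Gᴴ) (weyl_commutation a b w₁ w₂)
  simp only [Matrix.mul_smul, Matrix.smul_mul, conj_mul_of_mem_unitaryGroup hG] at h_conj
  rw [h₁, h₂, weyl_commutation, weyl_mul_weyl, omegaPow_smul_weyl, omegaPow_smul_weyl, weyl_inj]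
    at h_conj
  exact (add_right_cancel h_conj.1).symm

lemma IsLagrangianSemibasis.map_conjGraph {u u' : Fin n → PhaseSpace d n}
    (hu : IsLagrangianSemibasis u) (h : ∀ i, (u i, u' i) ∈ conjGraph hG) :
    IsLagrangianSemibasis u' where
  linearIndependent := Fintype.linearIndependent_iff.2 fun t ht => by
    have h_mem : (∑ i, t i • u i, 0) ∈ conjGraph hG := by
      simpa only [Prod.smul_mk, ← ht, prod_mk_sum] using sum_zmod_smul_mem (conjGraph hG) h t
    exact Fintype.linearIndependent_iff.1 hu.linearIndependent t (eq_zero_of_mem_conjGraph h_mem)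
  isotropic i j := by rw [← sympForm_eq_of_mem_conjGraph (h i) (h j), hu.isotropic]

end ConjugationGraph

section SemiClifford

variable {d n : ℕ} [NeZero d] [Invertible (2 : ZMod d)] {G : Mat d n}

/-- The phase space vectors of the Pauli gates that `G` conjugates to Pauli gates. -/
def pauliPreimage (G : Mat d n) : Set (PhaseSpace d n) :=
  {w | ∃ c, G * weyl c w * Gᴴ ∈ Pauli d n}

lemma SemiClifford.exists_isLagrangianSemibasis (hG : SemiClifford d n G) :
    ∃ u, IsLagrangianSemibasis u ∧ ∀ i, u i ∈ pauliPreimage G := by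
  obtain ⟨C₁, hC₁, C₂, hC₂, D, hD, hD_diag, rfl⟩ := hG
  have hC₂' := conjTranspose_mem_clifford hC₂
  have h_image (i : Fin n) : ∃ c w, C₂ᴴ * weyl 0 (Pi.single i 1, 0) * C₂ᴴᴴ = weyl c w :=
    mem_pauli_iff.1 (hC₂'.2 _ (weyl_mem_pauli _ _))
  choose c u hu using h_image
  refine ⟨u, isLagrangianSemibasis_single.map_conjGraph (hG := hC₂'.1) fun i => ⟨0, c i, hu i⟩,
    fun i => ⟨c i, ?_⟩⟩
  have hDZ : D * Zi d n i * Dᴴ = Zi d n i :=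
    (conj_eq_iff_of_mem_unitaryGroup hD.1).2 (diag_mul_ZP_comm hD_diag _)
  have h_conj : C₁ * D * C₂ * weyl (c i) (u i) * (C₁ * D * C₂)ᴴ = C₁ * Zi d n i * C₁ᴴ := by
    calc C₁ * D * C₂ * weyl (c i) (u i) * (C₁ * D * C₂)ᴴ
        = C₁ * (D * (C₂ᴴᴴ * (C₂ᴴ * Zi d n i * C₂ᴴᴴ) * C₂ᴴ) * Dᴴ) * C₁ᴴ := by
          rw [← hu, Zi_eq_weyl, conjTranspose_conjTranspose]
          simp only [conjTranspose_mul, mul_assoc]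
      _ = C₁ * Zi d n i * C₁ᴴ := by
          rw [conjTranspose_conj_conj_of_mem_unitaryGroup hC₂'.1, hDZ]
  rw [h_conj, Zi_eq_weyl]
  exact hC₁.2 _ (weyl_mem_pauli _ _)

lemma semiClifford_of_isLagrangianSemibasis (hG : G ∈ Third d n) {u : Fin n → PhaseSpace d n}
    (hu : IsLagrangianSemibasis u) (hGu : ∀ i, u i ∈ pauliPreimage G) : SemiClifford d n G := by
  choose a ha using hGu
  choose b u' hu' using fun i => mem_pauli_iff.1 (ha i)
  have hu'_lagrangian : IsLagrangianSemibasis u' :=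
    hu.map_conjGraph (hG := hG.1) fun i => ⟨a i, b i, hu' i⟩
  obtain ⟨C, hC, hCZ⟩ := hu.exists_clifford a
  obtain ⟨E, hE, hEZ⟩ := hu'_lagrangian.exists_clifford b
  have hE' := conjTranspose_mem_clifford hE
  refine ⟨E, hE, Cᴴ, conjTranspose_mem_clifford hC, Eᴴ * G * C, mul_mul_mem_third hE' hG hC,
    isDiag_of_forall_commute_Zi fun i => ?_, ?_⟩
  · have hE'_weyl : Eᴴ * weyl (b i) (u' i) = Zi d n i * Eᴴ := by
      rw [← conj_eq_iff_of_mem_unitaryGroup hE'.1, conjTranspose_conjTranspose, ← hEZ,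
        conjTranspose_conj_conj_of_mem_unitaryGroup hE.1]
    have hG_weyl := (conj_eq_iff_of_mem_unitaryGroup hG.1).1 (hu' i)
    have hC_Zi := (conj_eq_iff_of_mem_unitaryGroup hC.1).1 (hCZ i)
    calc Eᴴ * G * C * Zi d n i = Eᴴ * (G * weyl (a i) (u i)) * C := by
          simp only [mul_assoc, hC_Zi]
      _ = Eᴴ * weyl (b i) (u' i) * G * C := by rw [hG_weyl]; simp only [mul_assoc]
      _ = Zi d n i * (Eᴴ * G * C) := by rw [hE'_weyl]; simp only [mul_assoc]
  · calc G = E * Eᴴ * G * (C * Cᴴ) := by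
          rw [self_mul_conjTranspose_of_mem_unitaryGroup hE.1,
            self_mul_conjTranspose_of_mem_unitaryGroup hC.1, one_mul, mul_one]
      _ = E * (Eᴴ * G * C) * Cᴴ := by simp only [mul_assoc]

theorem semiClifford_iff_exists_isLagrangianSemibasis (hG : G ∈ Third d n) :
    SemiClifford d n G ↔ ∃ u, IsLagrangianSemibasis u ∧ ∀ i, u i ∈ pauliPreimage G :=
  ⟨SemiClifford.exists_isLagrangianSemibasis, fun ⟨_, hu, hGu⟩ =>
    semiClifford_of_isLagrangianSemibasis hG hu hGu⟩

end SemiClifford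

section QuadraticPart

lemma eq_zero_of_forall_dotProduct_mulVec_self_eq {R ι : Type*} [CommRing R] [Invertible (2 : R)]
    [Fintype ι] {Φ : Matrix ι ι R} (hΦ : Φ.IsSymm) {c : R} {p : ι → R}
    (h : ∀ x, x ⬝ᵥ Φ *ᵥ x = c + p ⬝ᵥ x) : Φ = 0 := by
  classical
  have hc : c = 0 := by simpa using (h 0).symm
  ext i j
  have h_polar := h (Pi.single i 1 + Pi.single j 1)
  have h_fst := h (Pi.single i 1)
  have h_snd := h (Pi.single j 1)
  have h_symm : Φ j i = Φ i j := hΦ.apply i j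
  simp only [mulVec_add, add_dotProduct, dotProduct_add, mulVec_single_one, single_one_dotProduct,
    dotProduct_single_one, col_apply, hc, h_symm] at h_polar h_fst h_snd
  rw [Matrix.zero_apply]
  linear_combination ⅟2 * (h_polar - h_fst - h_snd) - Φ i j * invOf_mul_self (2 : R)

variable {d n : ℕ}

/-- The quadratic part of the image of `Z^p X^q`, `w = (p, q)`, under conjugation by a gate whose
images of `Z_i` and `X_i` have quadratic parts `Φ i` and `Ψ i`. -/
def quadPart (Φ Ψ : Fin n → Matrix (Fin n) (Fin n) (ZMod d)) (w : PhaseSpace d n) :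
    Matrix (Fin n) (Fin n) (ZMod d) :=
  ∑ i, (w.1 i • Φ i + w.2 i • Ψ i)

lemma isSymm_quadPart {Φ Ψ : Fin n → Matrix (Fin n) (Fin n) (ZMod d)} (hΦ : ∀ i, (Φ i).IsSymm)
    (hΨ : ∀ i, (Ψ i).IsSymm) (w : PhaseSpace d n) : (quadPart Φ Ψ w).IsSymm := by
  rw [IsSymm, quadPart, transpose_sum]
  exact Finset.sum_congr rfl fun i _ => ((hΦ i).smul _).add ((hΨ i).smul _)

end QuadraticPart

section QuadraticGates

variable {d n : ℕ} [NeZero d]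

lemma quadGate_zero : quadGate d n 0 = 1 := by
  simp only [quadGate, zero_mulVec, dotProduct_zero, omegaPow_zero, diagonal_one]

lemma quadGate_add (Φ Ψ : Matrix (Fin n) (Fin n) (ZMod d)) :
    quadGate d n (Φ + Ψ) = quadGate d n Φ * quadGate d n Ψ := by
  simp only [quadGate, diagonal_mul_diagonal, add_mulVec, dotProduct_add, omegaPow_add]

variable [Invertible (2 : ZMod d)]

lemma weyl_mul_quadGate (c : ZMod d) (w : PhaseSpace d n) (Φ : Matrix (Fin n) (Fin n) (ZMod d)) :
    weyl c w * quadGate d n Φ = quadGate d n Φ * weyl c (w.1 - (Φ + Φᵀ) *ᵥ w.2, w.2) := by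
  ext x z
  rw [quadGate, mul_diagonal, diagonal_mul, weyl_apply, weyl_apply]
  split_ifs with hx
  · rw [← omegaPow_add, ← omegaPow_add, hx]
    have h_swap (a b : Fin n → ZMod d) : a ⬝ᵥ Φᵀ *ᵥ b = b ⬝ᵥ Φ *ᵥ a := by
      rw [mulVec_transpose, dotProduct_comm, dotProduct_mulVec]
    congr 1
    simp only [sub_dotProduct, dotProduct_comm (_ *ᵥ _), add_mulVec, mulVec_add, dotProduct_add,
      add_dotProduct, h_swap]
    linear_combination (-(w.2 ⬝ᵥ Φ *ᵥ w.2)) * invOf_mul_self (2 : ZMod d)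
  · rw [zero_mul, mul_zero]

lemma quadGate_mem_pauli_iff {Φ : Matrix (Fin n) (Fin n) (ZMod d)} (hΦ : Φ.IsSymm) :
    quadGate d n Φ ∈ Pauli d n ↔ Φ = 0 := by
  constructor
  · intro h
    obtain ⟨c, w, h⟩ := mem_pauli_iff.1 h
    have h_diag (x : Fin n → ZMod d) : omegaPow d (x ⬝ᵥ Φ *ᵥ x) = weyl c w x x := by
      rw [← h, quadGate, diagonal_apply_eq]
    have hw : w.2 = 0 := by
      by_contra hw
      refine omegaPow_ne_zero _ ((h_diag 0).trans ?_)
      rw [weyl_apply, if_neg (by simpa [eq_comm] using hw)]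
    refine eq_zero_of_forall_dotProduct_mulVec_self_eq hΦ (c := c) (p := w.1) fun x =>
      omegaPow_injective ?_
    rw [h_diag, weyl_apply, hw, add_zero, if_pos rfl, dotProduct_zero, mul_zero, sub_zero]
  · rintro rfl
    rw [quadGate_zero, ← weyl_zero_zero]
    exact weyl_mem_pauli 0 0

end QuadraticGates

section Simplified

variable {d n : ℕ} [NeZero d] [Invertible (2 : ZMod d)] {G : Mat d n}

/-- The pairs `(w, Φ)` such that `G` conjugates the Pauli gates at `w` to almost diagonal Clifford
gates with quadratic part `Φ`. Symmetry of `Φ` is not imposed. -/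
def almostDiagGraph (hG : G ∈ unitaryGroup (Fin n → ZMod d) ℂ) :
    AddSubmonoid (PhaseSpace d n × Matrix (Fin n) (Fin n) (ZMod d)) where
  carrier := {x | ∃ c, ∃ P ∈ Pauli d n, G * weyl c x.1 * Gᴴ = quadGate d n x.2 * P}
  zero_mem' := ⟨0, weyl 0 0, weyl_mem_pauli 0 0, by
    rw [Prod.fst_zero, Prod.snd_zero, weyl_zero_zero, quadGate_zero, mul_one, mul_one,
      self_mul_conjTranspose_of_mem_unitaryGroup hG]⟩
  add_mem' := by
    rintro x y ⟨a, P, hP, hx⟩ ⟨b, Q, hQ, hy⟩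
    obtain ⟨c, w, rfl⟩ := mem_pauli_iff.1 hP
    refine ⟨a + b + ⅟2 * sympForm x.1 y.1, _, mul_mem_pauli (weyl_mem_pauli c
      (w.1 - (y.2 + y.2ᵀ) *ᵥ w.2, w.2)) hQ, ?_⟩
    rw [Prod.fst_add, Prod.snd_add, ← weyl_mul_weyl, conj_mul_of_mem_unitaryGroup hG, hx, hy,
      quadGate_add]
    simp only [mul_assoc]
    rw [← mul_assoc (weyl c w), weyl_mul_quadGate, mul_assoc]

variable {Φ Ψ : Fin n → Matrix (Fin n) (Fin n) (ZMod d)}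

lemma mk_quadPart_mem_almostDiagGraph (hG : G ∈ unitaryGroup (Fin n → ZMod d) ℂ)
    (hZ : ∀ i, ∃ P ∈ Pauli d n, G * Zi d n i * Gᴴ = quadGate d n (Φ i) * P)
    (hX : ∀ i, ∃ P ∈ Pauli d n, G * Xi d n i * Gᴴ = quadGate d n (Ψ i) * P)
    (w : PhaseSpace d n) : (w, quadPart Φ Ψ w) ∈ almostDiagGraph hG := by
  have hZ_mem (i : Fin n) : ((Pi.single i 1, 0), Φ i) ∈ almostDiagGraph hG :=
    ⟨0, Zi_eq_weyl (d := d) i ▸ hZ i⟩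
  have hX_mem (i : Fin n) : ((0, Pi.single i 1), Ψ i) ∈ almostDiagGraph hG :=
    ⟨0, Xi_eq_weyl (d := d) i ▸ hX i⟩
  convert add_mem (sum_zmod_smul_mem _ hZ_mem w.1) (sum_zmod_smul_mem _ hX_mem w.2) using 1
  simp only [Prod.smul_mk, ← prod_mk_sum, smul_zero, Finset.sum_const_zero, Prod.mk_add_mk,
    add_zero, zero_add, ← Pi.single_smul, smul_eq_mul, mul_one, Finset.univ_sum_single,
    quadPart, Finset.sum_add_distrib]

lemma mem_pauliPreimage_iff_quadPart_eq_zero (hG : G ∈ unitaryGroup (Fin n → ZMod d) ℂ)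
    (hΦ : ∀ i, (Φ i).IsSymm) (hΨ : ∀ i, (Ψ i).IsSymm)
    (hZ : ∀ i, ∃ P ∈ Pauli d n, G * Zi d n i * Gᴴ = quadGate d n (Φ i) * P)
    (hX : ∀ i, ∃ P ∈ Pauli d n, G * Xi d n i * Gᴴ = quadGate d n (Ψ i) * P)
    (w : PhaseSpace d n) : w ∈ pauliPreimage G ↔ quadPart Φ Ψ w = 0 := by
  obtain ⟨a, P, hP, h_conj⟩ := mk_quadPart_mem_almostDiagGraph hG hZ hX w
  rw [← quadGate_mem_pauli_iff (isSymm_quadPart hΦ hΨ w), ← mul_mem_pauli_iff_left hP, ← h_conj]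
  refine ⟨fun ⟨c, hc⟩ => ?_, fun h => ⟨a, h⟩⟩
  rwa [← add_sub_cancel a c, add_comm, ← omegaPow_smul_weyl, Matrix.mul_smul, Matrix.smul_mul,
    omegaPow_smul_mem_pauli_iff] at hc

theorem semiClifford_iff_exists_quadPart_eq_zero (hG : G ∈ Third d n)
    (hΦ : ∀ i, (Φ i).IsSymm) (hΨ : ∀ i, (Ψ i).IsSymm)
    (hZ : ∀ i, ∃ P ∈ Pauli d n, G * Zi d n i * Gᴴ = quadGate d n (Φ i) * P)
    (hX : ∀ i, ∃ P ∈ Pauli d n, G * Xi d n i * Gᴴ = quadGate d n (Ψ i) * P) :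
    SemiClifford d n G ↔ ∃ u, IsLagrangianSemibasis u ∧ ∀ i, quadPart Φ Ψ (u i) = 0 := by
  simp only [semiClifford_iff_exists_isLagrangianSemibasis hG,
    mem_pauliPreimage_iff_quadPart_eq_zero hG.1 hΦ hΨ hZ hX]

end Simplified

section TwoQudits

variable {d : ℕ}

/-- The identification of `(ZMod d)⁴`, whose coordinates are the exponents of `Z₁, X₁, Z₂, X₂` in
this order, with two-qudit phase space. -/
def interleave (d : ℕ) : (Fin 4 → ZMod d) ≃ₗ[ZMod d] PhaseSpace d 2 where
  toFun u := (![u 0, u 2], ![u 1, u 3])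
  invFun w := ![w.1 0, w.2 0, w.1 1, w.2 1]
  map_add' u v := by simp
  map_smul' c u := by simp
  left_inv u := by ext i; fin_cases i <;> rfl
  right_inv w := by ext i <;> fin_cases i <;> rfl

lemma interleave_apply (u : Fin 4 → ZMod d) :
    interleave d u = (![u 0, u 2], ![u 1, u 3]) := rfl

lemma sympForm_interleave (u v : Fin 4 → ZMod d) :
    sympForm (interleave d u) (interleave d v) = symp4 d u v := by
  rw [sympForm_apply, interleave_apply, interleave_apply, vec2_dotProduct', vec2_dotProduct', symp4]
  ring

lemma isLagrangianSemibasis_interleave_iff (u v : Fin 4 → ZMod d) :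
    IsLagrangianSemibasis ![interleave d u, interleave d v] ↔
      LinearIndependent (ZMod d) ![u, v] ∧ symp4 d u v = 0 := by
  have h_comp : ![interleave d u, interleave d v] = interleave d ∘ ![u, v] := by
    ext i <;> fin_cases i <;> rfl
  have h_ind : LinearIndependent (ZMod d) ![interleave d u, interleave d v] ↔
      LinearIndependent (ZMod d) ![u, v] := by
    rw [h_comp]
    exact LinearMap.linearIndependent_iff (interleave d).toLinearMap (interleave d).ker
  rw [← h_ind, ← sympForm_interleave]
  refine ⟨fun h => ⟨h.linearIndependent, h.isotropic 0 1⟩, fun ⟨hli, h⟩ => ⟨hli, fun i j => ?_⟩⟩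
  fin_cases i <;> fin_cases j
  · exact sympForm_self _
  · exact h
  · exact (neg_sympForm _ _).symm.trans (neg_eq_zero.2 h)
  · exact sympForm_self _

lemma exists_isLagrangianSemibasis_two_iff (p : PhaseSpace d 2 → Prop) :
    (∃ w, IsLagrangianSemibasis w ∧ ∀ i, p (w i)) ↔
      ∃ u v, p (interleave d u) ∧ p (interleave d v) ∧
        LinearIndependent (ZMod d) ![u, v] ∧ symp4 d u v = 0 := by
  simp only [← isLagrangianSemibasis_interleave_iff]
  constructor
  · rintro ⟨w, hw, hp⟩
    refine ⟨(interleave d).symm (w 0), (interleave d).symm (w 1), ?_⟩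
    simp only [LinearEquiv.apply_symm_apply]
    refine ⟨hp 0, hp 1, ?_⟩
    convert hw using 1
    ext i <;> fin_cases i <;> rfl
  · rintro ⟨u, v, hu, hv, huv⟩
    exact ⟨_, huv, Fin.forall_fin_two.2 ⟨hu, hv⟩⟩

lemma quadPart_interleave_eq_zero_iff [Invertible (2 : ZMod d)]
    {Φ : Fin 4 → Matrix (Fin 2) (Fin 2) (ZMod d)} (hΦ : ∀ i, (Φ i).IsSymm) (u : Fin 4 → ZMod d) :
    quadPart ![Φ 0, Φ 2] ![Φ 1, Φ 3] (interleave d u) = 0 ↔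
      (of fun (r : Fin 3) (i : Fin 4) => ![(Φ i) 0 0, (Φ i) 1 1, 2 * (Φ i) 0 1] r) *ᵥ u = 0 := by
  let S := quadPart ![Φ 0, Φ 2] ![Φ 1, Φ 3] (interleave d u)
  have h_apply (r s) : S r s = ∑ i, Φ i r s * u i := by
    simp only [S, quadPart, interleave_apply, Fin.sum_univ_two, Fin.sum_univ_four,
      Matrix.add_apply, Matrix.smul_apply, smul_eq_mul, cons_val_zero, cons_val_one]
    ring
  have h_mulVec : (of fun (r : Fin 3) (i : Fin 4) => ![(Φ i) 0 0, (Φ i) 1 1, 2 * (Φ i) 0 1] r) *ᵥ u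
      = ![S 0 0, S 1 1, 2 * S 0 1] := by
    ext r
    fin_cases r <;> simp [mulVec, dotProduct, h_apply, Finset.mul_sum, mul_assoc]
  have h_symm : S 1 0 = S 0 1 := by simp only [h_apply, (hΦ _).apply 0 1]
  have h_two : 2 * S 0 1 = 0 ↔ S 0 1 = 0 := (isUnit_of_invertible 2).mul_right_eq_zero
  have h_entries : S = 0 ↔ (S 0 0 = 0 ∧ S 0 1 = 0) ∧ S 1 0 = 0 ∧ S 1 1 = 0 := by
    simp only [← Matrix.ext_iff, Fin.forall_fin_two, Matrix.zero_apply]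
  have h_vec : ![S 0 0, S 1 1, 2 * S 0 1] = 0 ↔ S 0 0 = 0 ∧ S 1 1 = 0 ∧ 2 * S 0 1 = 0 := by
    simp only [cons_eq_zero_iff, zero_empty, and_true]
  rw [h_mulVec, h_vec, h_entries, h_two, h_symm]
  tauto

theorem stmt3_general (d : ℕ) [NeZero d] (hodd : Odd d)
    (G : Mat d 2) (hG : G ∈ Third d 2)
    (Φ : Fin 4 → Matrix (Fin 2) (Fin 2) (ZMod d)) (hsymm : ∀ i, (Φ i).IsSymm)
    (P : Fin 4 → Mat d 2) (hP : ∀ i, P i ∈ Pauli d 2)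
    (h1 : G * Zi d 2 0 * Gᴴ = quadGate d 2 (Φ 0) * P 0)
    (h2 : G * Xi d 2 0 * Gᴴ = quadGate d 2 (Φ 1) * P 1)
    (h3 : G * Zi d 2 1 * Gᴴ = quadGate d 2 (Φ 2) * P 2)
    (h4 : G * Xi d 2 1 * Gᴴ = quadGate d 2 (Φ 3) * P 3) :
    SemiClifford d 2 G ↔
      ∃ u v : Fin 4 → ZMod d,
        (Matrix.of fun (r : Fin 3) (i : Fin 4) =>
            ![(Φ i) 0 0, (Φ i) 1 1, 2 * (Φ i) 0 1] r) *ᵥ u = 0 ∧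
        (Matrix.of fun (r : Fin 3) (i : Fin 4) =>
            ![(Φ i) 0 0, (Φ i) 1 1, 2 * (Φ i) 0 1] r) *ᵥ v = 0 ∧
        LinearIndependent (ZMod d) ![u, v] ∧ symp4 d u v = 0 := by
  have : Invertible (2 : ZMod d) := (ZMod.unitOfCoprime 2 hodd.coprime_two_left).invertible
  have h_criterion := semiClifford_iff_exists_quadPart_eq_zero (n := 2) hG
    (Φ := ![Φ 0, Φ 2]) (Ψ := ![Φ 1, Φ 3])
    (Fin.forall_fin_two.2 ⟨hsymm 0, hsymm 2⟩) (Fin.forall_fin_two.2 ⟨hsymm 1, hsymm 3⟩)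
    (Fin.forall_fin_two.2 ⟨⟨P 0, hP 0, h1⟩, ⟨P 2, hP 2, h3⟩⟩)
    (Fin.forall_fin_two.2 ⟨⟨P 1, hP 1, h2⟩, ⟨P 3, hP 3, h4⟩⟩)
  simp only [← quadPart_interleave_eq_zero_iff hsymm]
  exact h_criterion.trans
    (exists_isLagrangianSemibasis_two_iff fun w => quadPart ![Φ 0, Φ 2] ![Φ 1, Φ 3] w = 0)

end TwoQudits

/-- A simplified two-qudit third-level gate `G`, with conjugate tuple
`D_{Φᵢ} Pᵢ`, is semi-Clifford iff the kernel of the 3×4 matrix of quadratic parts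
contains a Lagrangian semibasis. -/
theorem stmt3 (d : ℕ) [NeZero d] (hp : Nat.Prime d) (hodd : Odd d)
    (G : Mat d 2) (hG : G ∈ Third d 2)
    (Φ : Fin 4 → Matrix (Fin 2) (Fin 2) (ZMod d)) (hsymm : ∀ i, (Φ i).IsSymm)
    (P : Fin 4 → Mat d 2) (hP : ∀ i, P i ∈ Pauli d 2)
    (h1 : G * Zi d 2 0 * Gᴴ = quadGate d 2 (Φ 0) * P 0)
    (h2 : G * Xi d 2 0 * Gᴴ = quadGate d 2 (Φ 1) * P 1)
    (h3 : G * Zi d 2 1 * Gᴴ = quadGate d 2 (Φ 2) * P 2)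
    (h4 : G * Xi d 2 1 * Gᴴ = quadGate d 2 (Φ 3) * P 3) :
    SemiClifford d 2 G ↔
      ∃ u v : Fin 4 → ZMod d,
        (Matrix.of fun (r : Fin 3) (i : Fin 4) =>
            ![(Φ i) 0 0, (Φ i) 1 1, 2 * (Φ i) 0 1] r) *ᵥ u = 0 ∧
        (Matrix.of fun (r : Fin 3) (i : Fin 4) =>
            ![(Φ i) 0 0, (Φ i) 1 1, 2 * (Φ i) 0 1] r) *ᵥ v = 0 ∧
        LinearIndependent (ZMod d) ![u, v] ∧ symp4 d u v = 0 := by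
  exact stmt3_general d hodd G hG Φ hsymm P hP h1 h2 h3 h4

end
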